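/- Let α : ℕ → ℂ satisfy Σ_{n=0}^∞ |α_n| < ∞ and let h : ℕ → ℂ satisfy Σ_{m=0}^∞ |h_m| < ∞. Define, for n ≥ 1, B_n(α) = conj(α_0)·Σ_{k=0}^n α_k α_{n−k} + 2α_0·Σ_{m=1}^∞ conj(α_m) α_{n+m} (the right-hand side of the truncated Szegő equation for mode n), and define the operators (Kh)_n = Σ_{m=0}^∞ α_{n+m+1}·conj(h_m) and (Dh)_n = −i·conj(α_0)·Σ_{k=0}^n α_k h_{n−k} − i·α_0·Σ_{k=1}^∞ conj(α_k) h_{n+k}. Then for every n ≥ 0: Σ_{m=0}^∞ B_{n+m+1}(α)·conj(h_m) = i·[ (D(Kh))_n − (K(Dh))_n ]. (This is the componentwise form of the Lax pair dK_u/dt = [D_u, K_u] for the truncated Szegő equation.) -/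

import Mathlib

open ComplexConjugate

/-- The right-hand side of the truncated Szegő equation for mode `n ≥ 1`:
`B_n(α) = conj(α₀)·Σ_{k=0}^n α_k α_{n-k} + 2 α₀ · Σ_{m=1}^∞ conj(α_m) α_{n+m}`. -/
noncomputable def Btr (α : ℕ → ℂ) (n : ℕ) : ℂ :=
  conj (α 0) * ∑ k ∈ Finset.range (n + 1), α k * α (n - k)
    + 2 * α 0 * ∑' m : ℕ, conj (α (m + 1)) * α (n + m + 1)

/-- The (antilinear) shifted Hankel operator `K`: `(Kh)_n = Σ_{m≥0} α_{n+m+1} conj(h_m)`. -/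
noncomputable def Kop (α h : ℕ → ℂ) (n : ℕ) : ℂ :=
  ∑' m : ℕ, α (n + m + 1) * conj (h m)

/-- The Toeplitz-type operator `D`:
`(Dh)_n = -i conj(α₀) Σ_{k=0}^n α_k h_{n-k} - i α₀ Σ_{k=1}^∞ conj(α_k) h_{n+k}`. -/
noncomputable def Dop (α h : ℕ → ℂ) (n : ℕ) : ℂ :=
  -Complex.I * conj (α 0) * ∑ k ∈ Finset.range (n + 1), α k * h (n - k)
    - Complex.I * α 0 * ∑' k : ℕ, conj (α (k + 1)) * h (n + k + 1)

/-!
Write `T a` for the lower triangular Toeplitz operator with symbol `a`, and `T* a` for its adjoint.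
Then `D = -i (conj (α 0) T α + α 0 T* α - |α 0|²)`, and `B` is the sequence
`conj (α 0) T α α + 2 α 0 T* α α - 2 |α 0|² α`. Since `K` is linear in its symbol and antilinear in
its argument, the Lax pair follows from three relations between Hankel and Toeplitz operators, all
of them reorderings of absolutely convergent double series:

* `K u ∘ T a = T* a ∘ K u`,
* `K (T* a u) = T* a ∘ K u`,
* `K (T a u) = T a ∘ K u + K a ∘ T* u`.
-/

open Finset

lemma hasSum_sum_antidiagonal {A M : Type*} [AddCommMonoid A] [HasAntidiagonal A]
    [AddCommMonoid M] [TopologicalSpace M] [ContinuousAdd M] [RegularSpace M]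
    {f : A × A → M} {s : M} (hf : HasSum f s) :
    HasSum (fun m => ∑ p ∈ antidiagonal m, f p) s := by
  refine (HasAntidiagonal.sigmaAntidiagonalEquivProd.hasSum_iff.mpr hf).sigma fun m => ?_
  exact (antidiagonal m).hasSum f

lemma summable_mul_of_norm_le {ι R : Type*} [NormedRing R] [CompleteSpace R] {f g : ι → R} {C : ℝ}
    (hf : Summable fun i => ‖f i‖) (hg : ∀ i, ‖g i‖ ≤ C) : Summable fun i => f i * g i :=
  .of_norm_bounded (hf.mul_right C) fun i =>
    (norm_mul_le _ _).trans (mul_le_mul_of_nonneg_left (hg i) (norm_nonneg _))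

lemma summable_mul_mul_comp_of_injective {ι κ σ R : Type*} [NormedRing R] [CompleteSpace R]
    {f : ι → R} {g : κ → R} {w : σ → R} {C : ℝ} {i : σ → ι} {j : σ → κ}
    (hf : Summable fun x => ‖f x‖) (hg : Summable fun y => ‖g y‖) (hw : ∀ s, ‖w s‖ ≤ C)
    (hij : Function.Injective fun s => (i s, j s)) :
    Summable fun s => f (i s) * (g (j s) * w s) := by
  have hfg := (hf.mul_norm hg).comp_injective hij
  simpa only [mul_assoc] using! summable_mul_of_norm_le hfg hw

/-- The lower triangular Toeplitz operator `(T a h)_n = Σ_{k+l=n} a_k h_l`, that is, multiplication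
by the power series with coefficients `a`. -/
def toeplitz {R : Type*} [Semiring R] (a h : ℕ → R) (n : ℕ) : R :=
  ∑ p ∈ antidiagonal n, a p.1 * h p.2

/-- The adjoint `(T* a h)_n = Σ_{k≥0} conj(a_k) h_{n+k}` of the Toeplitz operator `toeplitz a`.
It includes the term `k = 0`, which the series in `Btr` and `Dop` leave out. -/
noncomputable def toeplitzAdj (a h : ℕ → ℂ) (n : ℕ) : ℂ :=
  ∑' k, conj (a k) * h (n + k)

lemma tsum_conj_succ_mul {a h : ℕ → ℂ} {n : ℕ} (hs : Summable fun k => conj (a k) * h (n + k)) :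
    ∑' k, conj (a (k + 1)) * h (n + k + 1) = toeplitzAdj a h n - conj (a 0) * h n :=
  eq_sub_of_add_eq' hs.tsum_eq_zero_add.symm

lemma toeplitz_add_add_one {R : Type*} [Semiring R] (a u : ℕ → R) (n m : ℕ) :
    toeplitz a u (n + m + 1) = ∑ p ∈ antidiagonal n, a p.1 * u (p.2 + m + 1)
      + ∑ p ∈ antidiagonal m, a (n + p.1 + 1) * u p.2 := by
  simp only [toeplitz, Nat.sum_antidiagonal_eq_sum_range_succ_mk]
  rw [show (n + m + 1).succ = n.succ + m.succ by lia, sum_range_add]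
  congr 1
  · refine sum_congr rfl fun k hk => ?_
    rw [show n + m + 1 - k = n - k + m + 1 by grind]
  · refine sum_congr rfl fun j _ => ?_
    rw [show n.succ + j = n + j + 1 by lia, show n + m + 1 - (n + j + 1) = m - j by lia]

section HankelToeplitz

variable {a u h : ℕ → ℂ} {C : ℝ}

lemma summable_conj_mul_add (ha : Summable fun n => ‖a n‖) (hh : ∀ m, ‖h m‖ ≤ C) (n : ℕ) :
    Summable fun k => conj (a k) * h (n + k) :=
  summable_mul_of_norm_le (by simpa using ha) fun k => hh (n + k)

lemma hasSum_Kop (hu : Summable fun n => ‖u n‖) (hh : ∀ m, ‖h m‖ ≤ C) (n : ℕ) :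
    HasSum (fun m => u (n + m + 1) * conj (h m)) (Kop u h n) := by
  have hu' : Summable fun m => ‖u (n + m + 1)‖ :=
    hu.comp_injective (i := fun m => n + m + 1) fun _ _ hm => by simpa using hm
  exact (summable_mul_of_norm_le hu' fun m => by simpa using hh m).hasSum

lemma summable_toeplitzAdj_Kop (ha : Summable fun n => ‖a n‖) (hu : Summable fun n => ‖u n‖)
    (hh : ∀ m, ‖h m‖ ≤ C) (n : ℕ) :
    Summable fun p : ℕ × ℕ => conj (a p.1) * (u (n + p.1 + p.2 + 1) * conj (h p.2)) := by
  have hinj : Function.Injective fun p : ℕ × ℕ => (p.1, n + p.1 + p.2 + 1) := by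
    rintro ⟨k, j⟩ ⟨k', j'⟩ hp
    grind
  have ha' : Summable fun k => ‖conj (a k)‖ := by simpa using ha
  exact summable_mul_mul_comp_of_injective (f := fun k => conj (a k))
    (w := fun p : ℕ × ℕ => conj (h p.2)) ha' hu (fun p => by simpa using hh p.2) hinj

lemma hasSum_toeplitzAdj_Kop (ha : Summable fun n => ‖a n‖) (hu : Summable fun n => ‖u n‖)
    (hh : ∀ m, ‖h m‖ ≤ C) (n : ℕ) :
    HasSum (fun p : ℕ × ℕ => conj (a p.1) * (u (n + p.1 + p.2 + 1) * conj (h p.2)))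
      (toeplitzAdj a (Kop u h) n) := by
  have hs := summable_toeplitzAdj_Kop ha hu hh n
  convert hs.hasSum using 1
  simp only [toeplitzAdj, Kop, hs.tsum_prod, tsum_mul_left]

lemma summable_conj_mul_Kop (ha : Summable fun n => ‖a n‖) (hu : Summable fun n => ‖u n‖)
    (hh : ∀ m, ‖h m‖ ≤ C) (n : ℕ) : Summable fun k => conj (a k) * Kop u h (n + k) := by
  simpa only [Kop, tsum_mul_left] using (summable_toeplitzAdj_Kop ha hu hh n).prod

lemma hasSum_Kop_toeplitz (ha : Summable fun n => ‖a n‖) (hu : Summable fun n => ‖u n‖)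
    (hh : ∀ m, ‖h m‖ ≤ C) (n : ℕ) :
    HasSum (fun m => u (n + m + 1) * conj (toeplitz a h m)) (toeplitzAdj a (Kop u h) n) := by
  convert hasSum_sum_antidiagonal (hasSum_toeplitzAdj_Kop ha hu hh n) using 2 with m
  simp only [toeplitz, map_sum, map_mul, mul_sum]
  refine sum_congr rfl fun p hp => ?_
  rw [← mem_antidiagonal.mp hp, ← add_assoc]
  ring

lemma hasSum_Kop_toeplitzAdj_symbol (ha : Summable fun n => ‖a n‖)
    (hu : Summable fun n => ‖u n‖) (hh : ∀ m, ‖h m‖ ≤ C) (n : ℕ) :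
    HasSum (fun m => toeplitzAdj a u (n + m + 1) * conj (h m)) (toeplitzAdj a (Kop u h) n) := by
  have hswap := (Equiv.prodComm ℕ ℕ).hasSum_iff.mpr (hasSum_toeplitzAdj_Kop ha hu hh n)
  convert hswap.prod_fiberwise fun m => (hswap.summable.prod_factor m).hasSum using 2 with m
  rw [toeplitzAdj, ← tsum_mul_right]
  refine tsum_congr fun k => ?_
  simp only [Function.comp_apply, Equiv.prodComm_apply, Prod.fst_swap, Prod.snd_swap]
  rw [show n + m + 1 + k = n + k + m + 1 by lia, mul_assoc]

lemma summable_Kop_toeplitzAdj (ha : Summable fun n => ‖a n‖) (hu : Summable fun n => ‖u n‖)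
    (hh : ∀ m, ‖h m‖ ≤ C) (n : ℕ) :
    Summable fun p : ℕ × ℕ => a (n + p.1 + 1) * (u p.2 * conj (h (p.1 + p.2))) := by
  have hinj : Function.Injective fun p : ℕ × ℕ => (n + p.1 + 1, p.2) := by
    rintro ⟨j, l⟩ ⟨j', l'⟩ hp
    grind
  exact summable_mul_mul_comp_of_injective (w := fun p : ℕ × ℕ => conj (h (p.1 + p.2))) ha hu
    (fun p => by simpa using hh (p.1 + p.2)) hinj

lemma mul_conj_toeplitzAdj (a u h : ℕ → ℂ) (n j : ℕ) :
    a (n + j + 1) * conj (toeplitzAdj u h j)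
      = ∑' l, a (n + j + 1) * (u l * conj (h (j + l))) := by
  simp only [toeplitzAdj, Complex.conj_tsum, map_mul, Complex.conj_conj, tsum_mul_left]

lemma hasSum_Kop_toeplitzAdj (ha : Summable fun n => ‖a n‖) (hu : Summable fun n => ‖u n‖)
    (hh : ∀ m, ‖h m‖ ≤ C) (n : ℕ) :
    HasSum (fun j => a (n + j + 1) * conj (toeplitzAdj u h j)) (Kop a (toeplitzAdj u h) n) := by
  have hs := (summable_Kop_toeplitzAdj ha hu hh n).prod
  simp only [← mul_conj_toeplitzAdj] at hs
  exact hs.hasSum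

lemma hasSum_Kop_toeplitz_symbol (ha : Summable fun n => ‖a n‖) (hu : Summable fun n => ‖u n‖)
    (hh : ∀ m, ‖h m‖ ≤ C) (n : ℕ) :
    HasSum (fun m => toeplitz a u (n + m + 1) * conj (h m))
      (toeplitz a (Kop u h) n + Kop a (toeplitzAdj u h) n) := by
  have hlow : HasSum (fun m => ∑ p ∈ antidiagonal n, a p.1 * (u (p.2 + m + 1) * conj (h m)))
      (toeplitz a (Kop u h) n) :=
    hasSum_sum fun p _ => (hasSum_Kop hu hh p.2).mul_left (a p.1)
  have hs := summable_Kop_toeplitzAdj ha hu hh n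
  have hhigh := hasSum_sum_antidiagonal hs.hasSum
  simp only [hs.tsum_prod, ← mul_conj_toeplitzAdj] at hhigh
  rw [← Kop] at hhigh
  convert hlow.add hhigh using 2 with m
  simp only [toeplitz_add_add_one, add_mul, sum_mul, mul_assoc]
  congr 1
  refine sum_congr rfl fun p hp => ?_
  rw [mem_antidiagonal.mp hp]

end HankelToeplitz

section LaxPair

variable {α h : ℕ → ℂ} {C : ℝ}

lemma Btr_eq_toeplitz (hα : Summable fun n => ‖α n‖) (n : ℕ) :
    Btr α n = conj (α 0) * toeplitz α α n
      + 2 * α 0 * (toeplitzAdj α α n - conj (α 0) * α n) := by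
  have hbdd (k : ℕ) : ‖α k‖ ≤ ∑' i, ‖α i‖ := hα.le_tsum k fun _ _ => norm_nonneg _
  rw [Btr, tsum_conj_succ_mul (summable_conj_mul_add hα hbdd n), toeplitz,
    Nat.sum_antidiagonal_eq_sum_range_succ_mk]

lemma Dop_eq_toeplitz {n : ℕ} (hs : Summable fun k => conj (α k) * h (n + k)) :
    Dop α h n = -Complex.I * (conj (α 0) * toeplitz α h n
      + α 0 * (toeplitzAdj α h n - conj (α 0) * h n)) := by
  rw [Dop, tsum_conj_succ_mul hs, toeplitz, Nat.sum_antidiagonal_eq_sum_range_succ_mk]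
  ring

lemma Kop_Btr (hα : Summable fun n => ‖α n‖) (hh : ∀ m, ‖h m‖ ≤ C) (n : ℕ) :
    Kop (Btr α) h n = conj (α 0) * (toeplitz α (Kop α h) n + Kop α (toeplitzAdj α h) n)
      + 2 * α 0 * (toeplitzAdj α (Kop α h) n - conj (α 0) * Kop α h n) := by
  have hT := (hasSum_Kop_toeplitz_symbol hα hα hh n).mul_left (conj (α 0))
  have hT' := ((hasSum_Kop_toeplitzAdj_symbol hα hα hh n).sub
    ((hasSum_Kop hα hh n).mul_left (conj (α 0)))).mul_left (2 * α 0)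
  rw [← (hT.add hT').tsum_eq, Kop]
  refine tsum_congr fun m => ?_
  rw [Btr_eq_toeplitz hα]
  ring

lemma Kop_Dop (hα : Summable fun n => ‖α n‖) (hh : ∀ m, ‖h m‖ ≤ C) (n : ℕ) :
    Kop α (Dop α h) n = Complex.I * (α 0 * toeplitzAdj α (Kop α h) n
      + conj (α 0) * (Kop α (toeplitzAdj α h) n - α 0 * Kop α h n)) := by
  have hT := (hasSum_Kop_toeplitz hα hα hh n).mul_left (α 0)
  have hT' := ((hasSum_Kop_toeplitzAdj hα hα hh n).sub
    ((hasSum_Kop hα hh n).mul_left (α 0))).mul_left (conj (α 0))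
  rw [← ((hT.add hT').mul_left Complex.I).tsum_eq, Kop]
  refine tsum_congr fun m => ?_
  simp only [Dop_eq_toeplitz (summable_conj_mul_add hα hh m), map_mul, map_add, map_sub, map_neg,
    Complex.conj_I, Complex.conj_conj]
  ring

theorem truncated_szego_lax_pair_general (hα : Summable fun n => ‖α n‖) (hh : ∀ m, ‖h m‖ ≤ C)
    (n : ℕ) :
    ∑' m : ℕ, Btr α (n + m + 1) * conj (h m)
      = Complex.I * (Dop α (Kop α h) n - Kop α (Dop α h) n) := by
  have hDK := Dop_eq_toeplitz (summable_conj_mul_Kop hα hα hh n)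
  rw [← Kop, Kop_Btr hα hh, hDK, Kop_Dop hα hh]
  linear_combination (conj (α 0) * (toeplitz α (Kop α h) n + Kop α (toeplitzAdj α h) n)
    + 2 * α 0 * (toeplitzAdj α (Kop α h) n - conj (α 0) * Kop α h n)) * Complex.I_mul_I

end LaxPair

/-- Componentwise form of the Lax pair `dK_u/dt = [D_u, K_u]` for the
truncated Szegő equation. -/
theorem truncated_szego_lax_pair (α h : ℕ → ℂ)
    (hα : Summable fun n => ‖α n‖) (hh : Summable fun m => ‖h m‖) (n : ℕ) :
    ∑' m : ℕ, Btr α (n + m + 1) * conj (h m)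
      = Complex.I * (Dop α (Kop α h) n - Kop α (Dop α h) n) :=
  truncated_szego_lax_pair_general hα (fun m => hh.le_tsum m fun _ _ => norm_nonneg _) n
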